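/- Let Γ be a distance-regular graph with diameter D ≥ 3 and valency k satisfying 3 ≤ k < 3(a_1+1), and suppose Γ contains a 3-claw but no 4-claws. Then b_2 ≤ a_1 + 1, b_2 ≤ a_3 + 1, and b_2 ≤ k/(−θ_D), where θ_D denotes the smallest eigenvalue of the adjacency matrix of Γ. -/

import Mathlib

open SimpleGraph Finset

/-- `G` is a distance-regular graph with diameter `D` and intersection numbers
`b i` (number of neighbours of `y` at distance `i+1` from `x` when `dist x y = i`) and
`c i` (number of neighbours of `y` at distance `i-1` from `x` when `dist x y = i`). -/
def IsDRG {V : Type*} [Fintype V] (G : SimpleGraph V) (D : ℕ) (b c : ℕ → ℕ) : Prop :=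
  G.Connected ∧
  (∃ x y : V, G.dist x y = D) ∧
  (∀ x y : V, G.dist x y ≤ D) ∧
  c 0 = 0 ∧ c 1 = 1 ∧ b D = 0 ∧
  (∀ i ≤ D, ∀ x y : V, G.dist x y = i →
    {z : V | G.Adj y z ∧ G.dist x z = i - 1}.ncard = c i ∧
    {z : V | G.Adj y z ∧ G.dist x z = i + 1}.ncard = b i)

/-- `G` contains a `t`-claw: a vertex together with `t` pairwise nonadjacent neighbours
(an induced `K_{1,t}`). -/
def HasClaw {V : Type*} (G : SimpleGraph V) (t : ℕ) : Prop :=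
  ∃ (x : V) (s : Finset V), s.card = t ∧ (∀ y ∈ s, G.Adj x y) ∧
    (s : Set V).Pairwise fun y z => ¬ G.Adj y z

/-- `θ` is an eigenvalue of the (real) adjacency matrix of `G`. -/
def IsAdjEigenvalue {V : Type*} [Fintype V] (G : SimpleGraph V) [DecidableRel G.Adj]
    (θ : ℝ) : Prop :=
  ∃ v : V → ℝ, v ≠ 0 ∧ (G.adjMatrix ℝ).mulVec v = θ • v

/-- `G` contains an induced quadrangle: vertices `x, z₁, y, z₂` with
`dist x y = dist z₁ z₂ = 2` inducing a 4-cycle. -/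
def HasQuadrangle {V : Type*} (G : SimpleGraph V) : Prop :=
  ∃ x z₁ y z₂ : V, G.dist x y = 2 ∧ G.dist z₁ z₂ = 2 ∧
    G.Adj x z₁ ∧ G.Adj z₁ y ∧ G.Adj y z₂ ∧ G.Adj z₂ x

/-- The diameter-3 intersection array `{β₀,β₁,β₂; γ₁,γ₂,γ₃}`. -/
def arr3 (b c : ℕ → ℕ) (β₀ β₁ β₂ γ₁ γ₂ γ₃ : ℕ) : Prop :=
  b 0 = β₀ ∧ b 1 = β₁ ∧ b 2 = β₂ ∧ c 1 = γ₁ ∧ c 2 = γ₂ ∧ c 3 = γ₃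

/-!
If `dist x y = 2` and `Γ₃(x) ∩ Γ(y)` is a clique, all three bounds follow: together with `y` it is a
clique of size `b₂ + 1`, so the Delsarte clique bound gives `b₂ ≤ k / (-θ_D)`, while its `b₂`
vertices are all at distance `1` from `y` and at distance `3` from `x`, so `b₂ ≤ a₁ + 1` and
`b₂ ≤ a₃ + 1`.

A quadrangle `x, z₁, y, z₂` provides such `x` and `y`: the vertices `z₁, z₂` are nonadjacent in
`Γ(x) ∩ Γ(y)`, and with a nonadjacent pair in `Γ₃(x) ∩ Γ(y)` they would form a 4-claw.

Suppose there is no quadrangle, and let `H` be the complement of the local graph at the centre of a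
3-claw. Then `H` is edge-regular, has `k` vertices of degree `d = b₁`, and contains a triangle but
neither a `K₄` nor an induced `2K₂`. The neighbourhoods in `H` induce regular graphs without
triangles and induced `2K₂`, and counting around their pentagons shows that adjacent vertices have
`e = d / 2` common neighbours. It follows that the ends of an edge in a triangle are together
adjacent to all vertices, so `k = 2d - e = 3d / 2`, whereas `k < 3(a₁ + 1)` means `2k > 3b₁`.
-/

/-! ### Regular graphs without triangles and induced `2K₂` -/

/-- `F` contains no induced `2K₂`, the disjoint union of two edges. The edges `pq` and `st` are not
required to be disjoint, since the conclusion is automatic when they share a vertex. -/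
def TwoKTwoFree {W : Type*} (F : SimpleGraph W) : Prop :=
  ∀ ⦃p q s t⦄, F.Adj p q → F.Adj s t → F.Adj p s ∨ F.Adj p t ∨ F.Adj q s ∨ F.Adj q t

theorem not_adj_of_cliqueFree_three {W : Type*} {F : SimpleGraph W} (hF : F.CliqueFree 3)
    {a b c : W} (hab : F.Adj a b) (hac : F.Adj a c) : ¬F.Adj b c := by
  classical
  exact fun hbc => hF {a, b, c} (is3Clique_triple_iff.2 ⟨hab, hac, hbc⟩)

theorem forall_adj_or_adj_iff_card_eq {W : Type*} [Finite W] {F : SimpleGraph W} {r : ℕ}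
    (hF : F.CliqueFree 3) (hr : ∀ x, (F.neighborSet x).ncard = r) {u v : W} (huv : F.Adj u v) :
    (∀ z, F.Adj z u ∨ F.Adj z v) ↔ Nat.card W = 2 * r := by
  have hdisj : Disjoint (F.neighborSet u) (F.neighborSet v) :=
    Set.disjoint_left.2 fun _ hu hv => not_adj_of_cliqueFree_three hF huv hu hv
  have hunion := Set.ncard_union_eq hdisj
  rw [hr, hr, ← two_mul] at hunion
  have hiff : (F.neighborSet u ∪ F.neighborSet v).ncard = Nat.card W ↔
      F.neighborSet u ∪ F.neighborSet v = Set.univ :=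
    ⟨fun hcard => by_contra fun hne => (Set.ncard_lt_card hne).ne hcard,
      fun huniv => by rw [huniv, Set.ncard_univ]⟩
  rw [← hunion, eq_comm, hiff, Set.eq_univ_iff_forall]
  simp only [Set.mem_union, mem_neighborSet, F.adj_comm]

namespace TwoKTwoFree

variable {W : Type*} {F : SimpleGraph W} {r : ℕ} {u v z : W}

theorem induce (h : TwoKTwoFree F) (S : Set W) : TwoKTwoFree (F.induce S) :=
  fun _ _ _ _ hpq hst => h hpq hst

theorem adj_or_adj (h : TwoKTwoFree F) (huv : F.Adj u v) (hzu : ¬F.Adj z u) (hzv : ¬F.Adj z v)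
    {t : W} (hzt : F.Adj z t) : F.Adj t u ∨ F.Adj t v := by
  have := h hzt huv
  tauto

/-- Otherwise a neighbour `g` of `z` would be adjacent to all neighbours of `u` and to `z`. -/
theorem nonempty_commonNeighbors [Finite W] (h : TwoKTwoFree F)
    (hr : ∀ x, (F.neighborSet x).ncard = r) (hr0 : 0 < r) (hzu : ¬F.Adj z u) :
    (F.commonNeighbors z u).Nonempty := by
  by_contra hempty
  have hnot : ∀ t, F.Adj z t → ¬F.Adj u t := fun t hz hu => hempty ⟨t, hz, hu⟩
  obtain ⟨g, hzg⟩ : (F.neighborSet z).Nonempty := by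
    rwa [← Set.ncard_pos, hr]
  have hsub : F.neighborSet u ⊂ F.neighborSet g := by
    refine Set.ssubset_iff_exists.2 ⟨fun t hut => ?_, z, hzg.symm, fun huz => hzu huz.symm⟩
    rcases h hzg hut with hzu' | hzt | hgu | hgt
    · exact absurd hzu' hzu
    · exact absurd hut (hnot t hzt)
    · exact absurd hgu.symm (hnot g hzg)
    · exact hgt
  simpa only [hr, lt_irrefl] using Set.ncard_lt_ncard hsub

/-- The vertices `u, v, b, z, a` form an induced pentagon. -/
theorem exists_pentagon [Finite W] (h : TwoKTwoFree F) (hF : F.CliqueFree 3)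
    (hr : ∀ x, (F.neighborSet x).ncard = r) (huv : F.Adj u v) (hzu : ¬F.Adj z u)
    (hzv : ¬F.Adj z v) :
    ∃ a b, F.Adj u a ∧ F.Adj a z ∧ F.Adj z b ∧ F.Adj b v ∧
      ¬F.Adj a v ∧ ¬F.Adj b u ∧ ¬F.Adj a b := by
  have hr0 : 0 < r := by
    rw [← hr u, Set.ncard_pos]
    exact ⟨v, huv⟩
  obtain ⟨a, hza, hua⟩ := h.nonempty_commonNeighbors hr hr0 hzu
  obtain ⟨b, hzb, hvb⟩ := h.nonempty_commonNeighbors hr hr0 hzv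
  exact ⟨a, b, hua, hza.symm, hzb, hvb.symm, not_adj_of_cliqueFree_three hF hua huv,
    not_adj_of_cliqueFree_three hF hvb huv.symm, not_adj_of_cliqueFree_three hF hza hzb⟩

theorem ncard_commonNeighbors_add [Finite W] (h : TwoKTwoFree F) (hF : F.CliqueFree 3)
    (hr : ∀ x, (F.neighborSet x).ncard = r) (huv : F.Adj u v) (hzu : ¬F.Adj z u)
    (hzv : ¬F.Adj z v) :
    (F.commonNeighbors z u).ncard + (F.commonNeighbors z v).ncard = r := by
  have hdisj : Disjoint (F.commonNeighbors z u) (F.commonNeighbors z v) :=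
    Set.disjoint_left.2 fun _ hu hv => not_adj_of_cliqueFree_three hF huv hu.2 hv.2
  have hunion : F.commonNeighbors z u ∪ F.commonNeighbors z v = F.neighborSet z := by
    rw [commonNeighbors_eq, commonNeighbors_eq, ← Set.inter_union_distrib_left,
      Set.inter_eq_left]
    exact fun t hzt => (h.adj_or_adj huv hzu hzv hzt).imp Adj.symm Adj.symm
  rw [← Set.ncard_union_eq hdisj, hunion, hr]

/-- Each vertex of the pentagon through `z` and `uv` has `r` common neighbours in total with the two
ends of the opposite edge. As the pentagon is an odd cycle, this forces all five numbers of common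
neighbours to be equal. -/
theorem two_mul_ncard_commonNeighbors [Finite W] (h : TwoKTwoFree F) (hF : F.CliqueFree 3)
    (hr : ∀ x, (F.neighborSet x).ncard = r) (huv : F.Adj u v) (hzu : ¬F.Adj z u)
    (hzv : ¬F.Adj z v) : 2 * (F.commonNeighbors z u).ncard = r := by
  obtain ⟨a, b, hua, haz, hzb, hbv, hav, hbu, hab⟩ := h.exists_pentagon hF hr huv hzu hzv
  have add_at_z := h.ncard_commonNeighbors_add hF hr huv hzu hzv
  have add_at_a := h.ncard_commonNeighbors_add hF hr hbv hab hav
  have add_at_u := h.ncard_commonNeighbors_add hF hr hzb (mt Adj.symm hzu) (mt Adj.symm hbu)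
  have add_at_v := h.ncard_commonNeighbors_add hF hr haz (mt Adj.symm hav) (mt Adj.symm hzv)
  have add_at_b := h.ncard_commonNeighbors_add hF hr hua hbu (mt Adj.symm hab)
  rw [F.commonNeighbors_symm u z, F.commonNeighbors_symm u b] at add_at_u
  rw [F.commonNeighbors_symm v a, F.commonNeighbors_symm v z] at add_at_v
  rw [F.commonNeighbors_symm b a] at add_at_b
  omega

/-- The graph is not bipartite, as it contains a pentagon. -/
theorem exists_adj_and_iff [Finite W] (h : TwoKTwoFree F) (hF : F.CliqueFree 3)
    (hr : ∀ x, (F.neighborSet x).ncard = r) (huv : F.Adj u v) (hzu : ¬F.Adj z u)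
    (hzv : ¬F.Adj z v) (P : W → Prop) : ∃ a b, F.Adj a b ∧ (P a ↔ P b) := by
  obtain ⟨a, b, hua, haz, hzb, hbv, -⟩ := h.exists_pentagon hF hr huv hzu hzv
  by_contra! halt
  have alt_uv := halt u v huv
  have alt_ua := halt u a hua
  have alt_az := halt a z haz
  have alt_zb := halt z b hzb
  have alt_bv := halt b v hbv
  tauto

end TwoKTwoFree

/-! ### Edge-regular graphs without `K₄` and induced `2K₂` -/

/-- `H` is edge-regular: all vertices have degree `d` and the ends of every edge have `e` common
neighbours. -/
structure IsEdgeRegular {W : Type*} (H : SimpleGraph W) (d e : ℕ) : Prop where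
  ncard_neighborSet : ∀ v, (H.neighborSet v).ncard = d
  ncard_commonNeighbors : ∀ ⦃u v⦄, H.Adj u v → (H.commonNeighbors u v).ncard = e

/-- The local graph of `H` at `w`: the subgraph induced on the neighbourhood of `w`. -/
abbrev localGraph {W : Type*} (H : SimpleGraph W) (w : W) : SimpleGraph (H.neighborSet w) :=
  H.induce (H.neighborSet w)

section LocalGraph

variable {W : Type*} {H : SimpleGraph W} {w : W}

theorem image_neighborSet_localGraph (x : H.neighborSet w) :
    Subtype.val '' (localGraph H w).neighborSet x = H.commonNeighbors w x := by
  ext t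
  simp [mem_commonNeighbors, and_comm]

theorem image_commonNeighbors_localGraph (x y : H.neighborSet w) :
    Subtype.val '' (localGraph H w).commonNeighbors x y =
      H.neighborSet w ∩ H.commonNeighbors x y := by
  ext t
  simp [mem_commonNeighbors, and_comm, and_left_comm]

theorem cliqueFree_localGraph {n : ℕ} (hH : H.CliqueFree (n + 1)) :
    (localGraph H w).CliqueFree n := by
  rw [cliqueFree_induce_iff, ← Set.univ_inter (H.neighborSet w)]
  exact CliqueFreeOn.of_succ H hH.cliqueFreeOn (Set.mem_univ w)

theorem isNClique_four [DecidableEq W] {p q s t : W} (hpq : H.Adj p q) (hps : H.Adj p s)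
    (hpt : H.Adj p t) (hqs : H.Adj q s) (hqt : H.Adj q t) (hst : H.Adj s t) :
    H.IsNClique 4 {p, q, s, t} :=
  (is3Clique_triple_iff.2 ⟨hqs, hqt, hst⟩).insert (by simp [hpq, hps, hpt])

theorem not_adj_of_cliqueFree_four (hH : H.CliqueFree 4) {p q s t : W} (hpq : H.Adj p q)
    (hps : H.Adj p s) (hpt : H.Adj p t) (hqs : H.Adj q s) (hqt : H.Adj q t) : ¬H.Adj s t := by
  classical
  exact fun hst => hH _ (isNClique_four hpq hps hpt hqs hqt hst)

end LocalGraph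

namespace IsEdgeRegular

variable {W : Type*} {H : SimpleGraph W} {d e : ℕ} {u v w z : W}

theorem ncard_neighborSet_localGraph (h : IsEdgeRegular H d e) (x : H.neighborSet w) :
    ((localGraph H w).neighborSet x).ncard = e := by
  rw [← Set.ncard_image_of_injective _ Subtype.val_injective, image_neighborSet_localGraph,
    h.ncard_commonNeighbors x.2]

theorem forall_adj_or_adj_iff [Finite W] (h : IsEdgeRegular H d e) (hK : H.CliqueFree 4)
    (hwu : H.Adj w u) (hwv : H.Adj w v) (huv : H.Adj u v) :
    (∀ z, H.Adj w z → H.Adj z u ∨ H.Adj z v) ↔ d = 2 * e := by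
  have hloc := forall_adj_or_adj_iff_card_eq (cliqueFree_localGraph hK)
    h.ncard_neighborSet_localGraph (show (localGraph H w).Adj ⟨u, hwu⟩ ⟨v, hwv⟩ from huv)
  rw [Nat.card_coe_set_eq, h.ncard_neighborSet] at hloc
  rw [← hloc]
  exact ⟨fun hz x => hz x x.2, fun hx z hwz => hx ⟨z, hwz⟩⟩

theorem exists_not_adj_of_ne [Finite W] (h : IsEdgeRegular H d e) (hK : H.CliqueFree 4)
    (hde : d ≠ 2 * e) (hwu : H.Adj w u) (hwv : H.Adj w v) (huv : H.Adj u v) :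
    ∃ z, H.Adj w z ∧ ¬H.Adj z u ∧ ¬H.Adj z v := by
  by_contra! hz
  refine hde ((h.forall_adj_or_adj_iff hK hwu hwv huv).1 fun z hwz => ?_)
  exact or_iff_not_imp_left.2 (hz z hwz)

theorem two_mul_ncard_inter_commonNeighbors [Finite W] (h : IsEdgeRegular H d e)
    (hK : H.CliqueFree 4) (h2 : TwoKTwoFree (localGraph H w)) (hwu : H.Adj w u) (hwv : H.Adj w v)
    (huv : H.Adj u v) (hwz : H.Adj w z) (hzu : ¬H.Adj z u) (hzv : ¬H.Adj z v) :
    2 * (H.neighborSet w ∩ H.commonNeighbors z u).ncard = e := by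
  lift u to H.neighborSet w using hwu
  lift v to H.neighborSet w using hwv
  lift z to H.neighborSet w using hwz
  rw [← image_commonNeighbors_localGraph, Set.ncard_image_of_injective _ Subtype.val_injective]
  exact h2.two_mul_ncard_commonNeighbors (u := u) (v := v) (z := z) (cliqueFree_localGraph hK)
    h.ncard_neighborSet_localGraph huv hzu hzv

theorem exists_adj_of_not_adj [Finite W] (h : IsEdgeRegular H d e)
    (h2 : TwoKTwoFree (localGraph H w)) (he : 0 < e) (hwz : H.Adj w z) (hwu : H.Adj w u)
    (hzu : ¬H.Adj z u) : ∃ t, H.Adj w t ∧ H.Adj z t ∧ H.Adj u t := by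
  lift u to H.neighborSet w using hwu
  lift z to H.neighborSet w using hwz
  obtain ⟨t, hzt, hut⟩ := h2.nonempty_commonNeighbors (z := z) (u := u)
    h.ncard_neighborSet_localGraph he hzu
  exact ⟨t, t.2, hzt, hut⟩

theorem exists_triangle [Finite W] (h : IsEdgeRegular H d e) (he : 0 < e) (huv : H.Adj u v)
    (z : W) : ∃ x y, H.Adj z x ∧ H.Adj z y ∧ H.Adj x y := by
  obtain ⟨x, hzx⟩ : (H.neighborSet z).Nonempty := by
    rw [← Set.ncard_pos, h.ncard_neighborSet, ← h.ncard_neighborSet u, Set.ncard_pos]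
    exact ⟨v, huv⟩
  obtain ⟨y, hzy, hxy⟩ : (H.commonNeighbors z x).Nonempty := by
    rwa [← Set.ncard_pos, h.ncard_commonNeighbors hzx]
  exact ⟨x, y, hzx, hzy, hxy⟩

/-- As there is no `K₄`, the common neighbours of `u` and `v` form an independent set. So `N(z)`
induces a bipartite graph, and cannot contain a pentagon. -/
theorem eq_two_mul_of_forall_mem_commonNeighbors [Finite W] (h : IsEdgeRegular H d e)
    (hK : H.CliqueFree 4) (h2 : TwoKTwoFree (localGraph H z)) (he : 0 < e) (huv : H.Adj u v)
    (hcover : ∀ a b, H.Adj z a → H.Adj z b → H.Adj a b →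
      a ∈ H.commonNeighbors u v ∨ b ∈ H.commonNeighbors u v) : d = 2 * e := by
  by_contra hde
  obtain ⟨x, y, hzx, hzy, hxy⟩ := h.exists_triangle he huv z
  obtain ⟨s, hzs, hsx, hsy⟩ := h.exists_not_adj_of_ne hK hde hzx hzy hxy
  lift x to H.neighborSet z using hzx
  lift y to H.neighborSet z using hzy
  lift s to H.neighborSet z using hzs
  obtain ⟨a, b, hab, hiff⟩ := h2.exists_adj_and_iff (u := x) (v := y) (z := s)
    (cliqueFree_localGraph hK) h.ncard_neighborSet_localGraph hxy hsx hsy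
    (↑· ∈ H.commonNeighbors u v)
  have hmem : (a : W) ∈ H.commonNeighbors u v ∧ (b : W) ∈ H.commonNeighbors u v := by
    have := hcover a b a.2 b.2 hab
    tauto
  exact not_adj_of_cliqueFree_four hK huv hmem.1.1 hmem.2.1 hmem.1.2 hmem.2.2 hab

theorem exists_adj_and_not_adj [Finite W] (h : IsEdgeRegular H d e) (hK : H.CliqueFree 4)
    (h2 : TwoKTwoFree (localGraph H z)) (he : 0 < e) (hde : d ≠ 2 * e) (huv : H.Adj u v)
    (hcover_u : ∀ p q, H.Adj z p → H.Adj z q → H.Adj p q → H.Adj p u ∨ H.Adj q u)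
    (hcover_v : ∀ p q, H.Adj z p → H.Adj z q → H.Adj p q → H.Adj p v ∨ H.Adj q v) :
    ∃ a b, H.Adj z a ∧ H.Adj z b ∧ H.Adj a b ∧ ¬H.Adj a v ∧ ¬H.Adj b u := by
  contrapose! hde with hmem
  refine h.eq_two_mul_of_forall_mem_commonNeighbors hK h2 he huv fun a b hza hzb hab => ?_
  have hu := hcover_u a b hza hzb hab
  have hv := hcover_v a b hza hzb hab
  have hmem_ab := hmem a b hza hzb hab
  have hmem_ba := hmem b a hzb hza hab.symm
  simp only [mem_commonNeighbors, H.adj_comm u, H.adj_comm v]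
  tauto

/-- Suppose not, and let `ab` be an edge of `N(z)` with `a` not adjacent to `v` and `b` not adjacent
to `u`. There are common neighbours `α`, `β` of `z, u, v` adjacent to `a` and `b`, respectively, and
`N(α) ∩ N(z) ∩ N(v) ⊊ N(β) ∩ N(z) ∩ N(v)`, although both sets have `e / 2` elements. -/
theorem eq_two_mul_or_adj_or_adj [Finite W] (h : IsEdgeRegular H d e) (hK : H.CliqueFree 4)
    (h2 : TwoKTwoFree H) (he : 0 < e) (huv : H.Adj u v)
    (hcover_u : ∀ p q, H.Adj z p → H.Adj z q → H.Adj p q → H.Adj p u ∨ H.Adj q u)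
    (hcover_v : ∀ p q, H.Adj z p → H.Adj z q → H.Adj p q → H.Adj p v ∨ H.Adj q v) :
    d = 2 * e ∨ H.Adj z u ∨ H.Adj z v := by
  by_contra! ⟨hde, hzu, hzv⟩
  obtain ⟨a, b, hza, hzb, hab, hav, hbu⟩ :=
    h.exists_adj_and_not_adj hK (h2.induce _) he hde huv hcover_u hcover_v
  have hau : H.Adj a u := (h2.adj_or_adj huv hzu hzv hza).resolve_right hav
  have hbv : H.Adj b v := (h2.adj_or_adj huv hzu hzv hzb).resolve_left hbu
  obtain ⟨α, haα, hzα, huα⟩ := h.exists_adj_of_not_adj (h2.induce _) he hza.symm hau hzu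
  obtain ⟨β, hbβ, hzβ, hvβ⟩ := h.exists_adj_of_not_adj (h2.induce _) he hzb.symm hbv hzv
  have hαv : H.Adj α v := (hcover_v a α hza hzα haα).resolve_left hav
  have hβu : H.Adj β u := (hcover_u b β hzb hzβ hbβ).resolve_left hbu
  have hαb : ¬H.Adj α b := not_adj_of_cliqueFree_four hK hza hzα hzb haα hab
  have hαβ : ¬H.Adj α β := not_adj_of_cliqueFree_four hK huv huα hβu.symm hαv.symm hvβ
  have half {x : W} (hxu : H.Adj x u) (hxv : H.Adj x v) (hzx : H.Adj z x) :
      2 * (H.neighborSet x ∩ H.commonNeighbors z v).ncard = e :=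
    h.two_mul_ncard_inter_commonNeighbors hK (h2.induce _) hxv hxu huv.symm hzx.symm hzv hzu
  suffices hsub : H.neighborSet α ∩ H.commonNeighbors z v ⊂
      H.neighborSet β ∩ H.commonNeighbors z v by
    have hα := half huα.symm hαv hzα
    have hβ := half hβu hvβ.symm hzβ
    have := Set.ncard_lt_ncard hsub
    omega
  refine Set.ssubset_iff_exists.2 ⟨?_, b, ⟨hbβ.symm, hzb, hbv.symm⟩, fun hb => hαb hb.1⟩
  rintro γ ⟨hαγ, hzγ, hvγ⟩
  have hγu : ¬H.Adj γ u := fun hγu =>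
    not_adj_of_cliqueFree_four hK huv huα hγu.symm hαv.symm hvγ hαγ
  have hγb : ¬H.Adj γ b := fun hγb => (hcover_u γ b hzγ hzb hγb).elim hγu hbu
  have := h2 hαγ hbβ
  exact ⟨Adj.symm (by tauto), hzγ, hvγ⟩

/-- Otherwise some edge `pq` of `N(z)` avoids `N(u)`, say. As there is no `2K₂`, its ends are
adjacent to both `v` and `w`, which gives a `K₄`. -/
theorem eq_two_mul_or_adj_triangle [Finite W] (h : IsEdgeRegular H d e) (hK : H.CliqueFree 4)
    (h2 : TwoKTwoFree H) (huv : H.Adj u v) (huw : H.Adj u w) (hvw : H.Adj v w) (z : W) :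
    d = 2 * e ∨ H.Adj z u ∨ H.Adj z v ∨ H.Adj z w := by
  by_contra! ⟨hde, hzu, hzv, hzw⟩
  have he : 0 < e := by
    rw [← h.ncard_commonNeighbors huv, Set.ncard_pos]
    exact ⟨w, huw, hvw⟩
  have cover {x y y' : W} (hxy : H.Adj x y) (hxy' : H.Adj x y') (hyy' : H.Adj y y')
      (hzx : ¬H.Adj z x) (hzy : ¬H.Adj z y) (hzy' : ¬H.Adj z y') (p q : W) (hzp : H.Adj z p)
      (hzq : H.Adj z q) (hpq : H.Adj p q) : H.Adj p x ∨ H.Adj q x := by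
    by_contra! ⟨hpx, hqx⟩
    have hpy := (h2.adj_or_adj hxy hzx hzy hzp).resolve_left hpx
    have hqy := (h2.adj_or_adj hxy hzx hzy hzq).resolve_left hqx
    have hpy' := (h2.adj_or_adj hxy' hzx hzy' hzp).resolve_left hpx
    have hqy' := (h2.adj_or_adj hxy' hzx hzy' hzq).resolve_left hqx
    exact not_adj_of_cliqueFree_four hK hpq hpy hpy' hqy hqy' hyy'
  have := h.eq_two_mul_or_adj_or_adj hK h2 he huv (cover huv huw hvw hzu hzv hzw)
    (cover huv.symm hvw huw hzv hzu hzw)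
  tauto

/-- Otherwise `vw` has no neighbour in common with some `z ∈ N(u)`. The triangles on `z` meet the
neighbourhoods of `v` and of `w`, so that `z` is adjacent to `v` or `w`. -/
theorem eq_two_mul [Finite W] (h : IsEdgeRegular H d e) (hK : H.CliqueFree 4)
    (h2 : TwoKTwoFree H) (huv : H.Adj u v) (huw : H.Adj u w) (hvw : H.Adj v w) : d = 2 * e := by
  by_contra hde
  have he : 0 < e := by
    rw [← h.ncard_commonNeighbors huv, Set.ncard_pos]
    exact ⟨w, huw, hvw⟩
  obtain ⟨z, -, hzv, hzw⟩ := h.exists_not_adj_of_ne hK hde huv huw hvw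
  have cover (x : W) (hzx : ¬H.Adj z x) (p q : W) (hzp : H.Adj z p) (hzq : H.Adj z q)
      (hpq : H.Adj p q) : H.Adj p x ∨ H.Adj q x := by
    have := h.eq_two_mul_or_adj_triangle hK h2 hzp hzq hpq x
    simp only [H.adj_comm x] at this
    tauto
  have := h.eq_two_mul_or_adj_or_adj hK h2 he hvw (cover v hzv) (cover w hzw)
  tauto

/-- A vertex `s` adjacent to neither `u` nor `v` has a neighbour `t` adjacent to one of them, say to
`u`. Then `t` is adjacent to a second vertex of the triangle `uvw`, and `s` to a second vertex of
the triangle so formed, which is one of `u, v, w`. -/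
theorem adj_or_adj_of_triangle [Finite W] (h : IsEdgeRegular H d e) (hK : H.CliqueFree 4)
    (h2 : TwoKTwoFree H) (huv : H.Adj u v) (huw : H.Adj u w) (hvw : H.Adj v w) (s : W) :
    H.Adj s u ∨ H.Adj s v := by
  have hde := h.eq_two_mul hK h2 huv huw hvw
  have second {x y z t : W} (hxy : H.Adj x y) (hxz : H.Adj x z) (hyz : H.Adj y z)
      (htx : H.Adj t x) : H.Adj t y ∨ H.Adj t z :=
    (h.forall_adj_or_adj_iff hK hxy hxz hyz).2 hde t htx.symm
  by_contra! hs
  obtain ⟨hsu, hsv⟩ := hs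
  have hsw : ¬H.Adj s w := fun hsw => (second huw.symm hvw.symm huv hsw).elim hsu hsv
  have not_near {x y z t : W} (hxy : H.Adj x y) (hxz : H.Adj x z) (hyz : H.Adj y z)
      (hsx : ¬H.Adj s x) (hsy : ¬H.Adj s y) (hsz : ¬H.Adj s z) (hst : H.Adj s t) :
      ¬H.Adj t x := by
    intro htx
    rcases second hxy hxz hyz htx with hty | htz
    · exact (second htx hty hxy hst).elim hsx hsy
    · exact (second htx htz hxz hst).elim hsx hsz
  obtain ⟨t, hst⟩ : (H.neighborSet s).Nonempty := by
    rw [← Set.ncard_pos, h.ncard_neighborSet, ← h.ncard_neighborSet u, Set.ncard_pos]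
    exact ⟨v, huv⟩
  exact (h2.adj_or_adj huv hsu hsv hst).elim (not_near huv huw hvw hsu hsv hsw hst)
    (not_near huv.symm hvw huw hsv hsu hsw hst)

theorem two_mul_card_eq [Finite W] (h : IsEdgeRegular H d e) (hK : H.CliqueFree 4)
    (h2 : TwoKTwoFree H) (hT : ¬H.CliqueFree 3) : 2 * Nat.card W = 3 * d := by
  classical
  simp only [CliqueFree, not_forall, not_not] at hT
  obtain ⟨T, hT⟩ := hT
  obtain ⟨u, v, w, huv, huw, hvw, -⟩ := is3Clique_iff.1 hT
  have hunion : H.neighborSet u ∪ H.neighborSet v = Set.univ :=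
    Set.eq_univ_of_forall fun s =>
      (h.adj_or_adj_of_triangle hK h2 huv huw hvw s).imp Adj.symm Adj.symm
  have hcount := Set.ncard_union_add_ncard_inter (H.neighborSet u) (H.neighborSet v)
  rw [hunion, Set.ncard_univ, ← commonNeighbors_eq, h.ncard_commonNeighbors huv,
    h.ncard_neighborSet, h.ncard_neighborSet] at hcount
  have := h.eq_two_mul hK h2 huv huw hvw
  omega

end IsEdgeRegular

/-! ### Claws and quadrangles in distance-regular graphs -/

/-- The set `Γ_j(x) ∩ Γ(y)`, whose size is an intersection number in a distance-regular graph when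
`j` differs by at most `1` from the distance of `x` and `y`. -/
def neighborsAtDist {V : Type*} (G : SimpleGraph V) (x y : V) (j : ℕ) : Set V :=
  {z | G.Adj y z ∧ G.dist x z = j}

/-- The complement of the local graph of `G` at `y`. Its cliques are the sets of leaves of the claws
with centre `y`. -/
abbrev coLocalGraph {V : Type*} (G : SimpleGraph V) (y : V) : SimpleGraph (G.neighborSet y) :=
  Gᶜ.induce (G.neighborSet y)

section Claws

variable {V : Type*} {G : SimpleGraph V} {y u v : V}

theorem compl_adj_iff_dist_eq_two (hyu : G.Adj y u) (hyv : G.Adj y v) :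
    Gᶜ.Adj u v ↔ G.dist u v = 2 := by
  have hpath : (G.commonNeighbors u v).Nonempty := ⟨y, hyu.symm, hyv.symm⟩
  have hreach : G.Reachable u v := hyu.symm.reachable.trans hyv.reachable
  rw [← Nat.cast_inj (R := ℕ∞), hreach.coe_dist_eq_edist, Nat.cast_ofNat, edist_eq_two_iff,
    compl_adj, and_iff_left hpath]

theorem hasClaw_iff {t : ℕ} : HasClaw G t ↔ ∃ y, ¬(coLocalGraph G y).CliqueFree t := by
  simp only [cliqueFree_induce_iff, CliqueFreeOn, isNClique_iff, isClique_compl, HasClaw,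
    not_forall, not_not, exists_prop]
  exact exists_congr fun y => exists_congr fun s =>
    ⟨fun ⟨hcard, hadj, hind⟩ => ⟨hadj, hind, hcard⟩, fun ⟨hadj, hind, hcard⟩ => ⟨hcard, hadj, hind⟩⟩

theorem cliqueFree_coLocalGraph {t : ℕ} (hclaw : ¬HasClaw G t) :
    (coLocalGraph G y).CliqueFree t := by
  by_contra hy
  exact hclaw (hasClaw_iff.2 ⟨y, hy⟩)

/-- A non-edge in each of the two sets would give a 4-claw with centre `y`. -/
theorem isClique_neighborsAtDist_or (hclaw : ¬HasClaw G 4) (x y : V) {j l : ℕ} (hjl : j + 1 < l) :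
    G.IsClique (neighborsAtDist G x y j) ∨ G.IsClique (neighborsAtDist G x y l) := by
  have far {p q : V} (hp : G.dist x p = j) (hq : G.dist x q = l) : Gᶜ.Adj p q := by
    refine ⟨fun hpq => ?_, fun hpq => ?_⟩
    · rw [hpq] at hp
      omega
    · have := hpq.diff_dist_adj (u := x)
      omega
  simp only [IsClique, Set.Pairwise]
  by_contra! ⟨⟨p, hp, q, hq, hpq, hpq'⟩, r, hr, s, hs, hrs, hrs'⟩
  lift p to G.neighborSet y using hp.1
  lift q to G.neighborSet y using hq.1
  lift r to G.neighborSet y using hr.1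
  lift s to G.neighborSet y using hs.1
  exact not_adj_of_cliqueFree_four (cliqueFree_coLocalGraph hclaw) (p := p) (q := q) (s := r)
    (t := s) ⟨hpq, hpq'⟩ (far hp.2 hr.2) (far hp.2 hs.2) (far hq.2 hr.2) (far hq.2 hs.2) ⟨hrs, hrs'⟩

theorem twoKTwoFree_coLocalGraph (hQ : ¬HasQuadrangle G) : TwoKTwoFree (coLocalGraph G y) := by
  intro p q s t hpq hst
  by_contra! ⟨hps, hpt, hqs, hqt⟩
  have adj {a b c : G.neighborSet y} (hbc : (coLocalGraph G y).Adj b c)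
      (hab : ¬(coLocalGraph G y).Adj a b) (hac : ¬(coLocalGraph G y).Adj a c) : G.Adj a b := by
    by_contra hadj
    refine hab ⟨fun heq => hac ?_, hadj⟩
    rwa [Subtype.ext heq]
  exact hQ ⟨p, s, q, t, (compl_adj_iff_dist_eq_two p.2 q.2).1 hpq,
    (compl_adj_iff_dist_eq_two s.2 t.2).1 hst, adj hst hps hpt, (adj hst hqs hqt).symm,
    adj hst.symm hqt hqs, (adj hst.symm hpt hps).symm⟩

theorem image_neighborSet_coLocalGraph (x : G.neighborSet y) :
    Subtype.val '' (coLocalGraph G y).neighborSet x = neighborsAtDist G x y 2 := by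
  ext t
  constructor
  · rintro ⟨t, hxt, rfl⟩
    exact ⟨t.2, (compl_adj_iff_dist_eq_two x.2 t.2).1 hxt⟩
  · rintro ⟨hyt, hxt⟩
    exact ⟨⟨t, hyt⟩, (compl_adj_iff_dist_eq_two x.2 hyt).2 hxt, rfl⟩

theorem neighborsAtDist_one (x y : V) : neighborsAtDist G x y 1 = G.commonNeighbors x y := by
  ext t
  simp only [neighborsAtDist, dist_eq_one_iff_adj, Set.mem_ofPred_eq, mem_commonNeighbors, and_comm]

/-- Without quadrangles, a common neighbour of `u` and `v` other than `y` is adjacent to `y`. -/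
theorem commonNeighbors_sdiff_singleton_eq (hQ : ¬HasQuadrangle G) (hyu : G.Adj y u)
    (hyv : G.Adj y v) (huv : Gᶜ.Adj u v) : G.commonNeighbors u v \ {y} =
      G.neighborSet y \ (neighborsAtDist G u y 2 ∪ neighborsAtDist G v y 2) := by
  ext t
  constructor
  · rintro ⟨⟨hut, hvt⟩, hty⟩
    have hyt : G.Adj y t := by
      by_contra hyt
      exact hQ ⟨y, u, t, v, (compl_adj_iff_dist_eq_two hyu.symm hut).1 ⟨Ne.symm hty, hyt⟩,
        (compl_adj_iff_dist_eq_two hyu hyv).1 huv, hyu, hut, hvt.symm, hyv.symm⟩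
    refine ⟨hyt, ?_⟩
    rintro (ht | ht)
    · exact ((compl_adj_iff_dist_eq_two hyu hyt).2 ht.2).2 hut
    · exact ((compl_adj_iff_dist_eq_two hyv hyt).2 ht.2).2 hvt
  · rintro ⟨hyt, hfar⟩
    have hut : u ≠ t → G.Adj u t := fun hne => by_contra fun hut =>
      hfar (Or.inl ⟨hyt, (compl_adj_iff_dist_eq_two hyu hyt).1 ⟨hne, hut⟩⟩)
    have hvt : v ≠ t → G.Adj v t := fun hne => by_contra fun hvt =>
      hfar (Or.inr ⟨hyt, (compl_adj_iff_dist_eq_two hyv hyt).1 ⟨hne, hvt⟩⟩)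
    refine ⟨⟨hut ?_, hvt ?_⟩, hyt.ne'⟩
    · rintro rfl
      exact huv.2 (hvt huv.1.symm).symm
    · rintro rfl
      exact huv.2 (hut huv.1)

end Claws

namespace IsDRG

variable {V : Type*} [Fintype V] {G : SimpleGraph V} {D : ℕ} {b c : ℕ → ℕ} {i : ℕ} {x y : V}

theorem ncard_neighborsAtDist_sub_one (h : IsDRG G D b c) (hxy : G.dist x y = i) :
    (neighborsAtDist G x y (i - 1)).ncard = c i := by
  obtain ⟨-, -, hle, -, -, -, h⟩ := h
  exact (h i (hxy ▸ hle x y) x y hxy).1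

theorem ncard_neighborsAtDist_add_one (h : IsDRG G D b c) (hxy : G.dist x y = i) :
    (neighborsAtDist G x y (i + 1)).ncard = b i := by
  obtain ⟨-, -, hle, -, -, -, h⟩ := h
  exact (h i (hxy ▸ hle x y) x y hxy).2

theorem ncard_neighborSet (h : IsDRG G D b c) (y : V) : (G.neighborSet y).ncard = b 0 := by
  rw [← h.ncard_neighborsAtDist_add_one (G.dist_self (v := y)), neighborsAtDist_one,
    commonNeighbors_eq, Set.inter_self]

theorem ncard_neighborsAtDist_self (h : IsDRG G D b c) (hxy : G.dist x y = i) :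
    ((neighborsAtDist G x y i).ncard : ℤ) = b 0 - b i - c i := by
  have hconn : G.Connected := h.1
  have hunion : G.neighborSet y = neighborsAtDist G x y (i - 1) ∪ neighborsAtDist G x y i ∪
      neighborsAtDist G x y (i + 1) := by
    ext z
    have hz (hyz : G.Adj y z) := hyz.diff_dist_adj (u := x)
    simp only [neighborsAtDist, Set.mem_union, Set.mem_ofPred_eq, mem_neighborSet, ← hxy]
    tauto
  have hdisj₁ : Disjoint (neighborsAtDist G x y (i - 1)) (neighborsAtDist G x y i) := by
    refine Set.disjoint_left.2 fun z hz hz' => hz.1.ne ?_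
    have hi : i - 1 = i := hz.2.symm.trans hz'.2
    have hxy₀ : G.dist x y = 0 := by omega
    have hxz₀ : G.dist x z = 0 := by rw [hz'.2, ← hxy, hxy₀]
    rw [← hconn.dist_eq_zero_iff.1 hxy₀, ← hconn.dist_eq_zero_iff.1 hxz₀]
  have hdisj₂ : Disjoint (neighborsAtDist G x y (i - 1) ∪ neighborsAtDist G x y i)
      (neighborsAtDist G x y (i + 1)) := by
    refine Set.disjoint_left.2 ?_
    rintro z (hz | hz) hz' <;> have := hz.2.symm.trans hz'.2 <;> omega
  have hcard := h.ncard_neighborSet y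
  rw [hunion, Set.ncard_union_eq hdisj₂, Set.ncard_union_eq hdisj₁,
    h.ncard_neighborsAtDist_sub_one hxy, h.ncard_neighborsAtDist_add_one hxy] at hcard
  omega

theorem ncard_le_of_isClique_of_dist (h : IsDRG G D b c) {S : Set V} (hS : G.IsClique S)
    (hne : S.Nonempty) (hdist : ∀ y ∈ S, G.dist x y = i) :
    (S.ncard : ℤ) ≤ b 0 - b i - c i + 1 := by
  obtain ⟨w, hw⟩ := hne
  have hsub : S \ {w} ⊆ neighborsAtDist G x w i :=
    fun z hz => ⟨hS hw hz.1 (Ne.symm hz.2), hdist z hz.1⟩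
  rw [← h.ncard_neighborsAtDist_self (hdist w hw), ← Set.ncard_sdiff_singleton_add_one hw]
  exact_mod_cast Nat.add_le_add_right (Set.ncard_le_ncard hsub) 1

theorem exists_adj_of_lt (h : IsDRG G D b c) (hi : i < D) :
    ∃ x y z, G.Adj y z ∧ G.dist x y = i ∧ G.dist x z = i + 1 := by
  obtain ⟨hconn, ⟨x, y, hxy⟩, -⟩ := h
  obtain ⟨p, hp⟩ := hconn.exists_walk_length_eq_dist x y
  have hdist {j : ℕ} (hj : j ≤ D) : G.dist x (p.getVert j) = j := by
    rw [← length_eq_dist_of_subwalk hp (p.isSubwalk_take j), Walk.take_length, hp, hxy,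
      min_eq_left hj]
  exact ⟨x, p.getVert i, p.getVert (i + 1), p.adj_getVert_succ (by omega), hdist hi.le, hdist hi⟩

theorem b_pos (h : IsDRG G D b c) (hi : i < D) : 0 < b i := by
  obtain ⟨x, y, z, hyz, hxy, hxz⟩ := h.exists_adj_of_lt hi
  rw [← h.ncard_neighborsAtDist_add_one hxy, Set.ncard_pos]
  exact ⟨z, hyz, hxz⟩

theorem isEdgeRegular_coLocalGraph (h : IsDRG G D b c) (hQ : ¬HasQuadrangle G) (y : V) :
    IsEdgeRegular (coLocalGraph G y) (b 1) (2 * b 1 + c 2 - b 0 - 1) where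
  ncard_neighborSet v := by
    rw [← Set.ncard_image_of_injective _ Subtype.val_injective, image_neighborSet_coLocalGraph,
      h.ncard_neighborsAtDist_add_one (dist_eq_one_iff_adj.2 v.2.symm)]
  ncard_commonNeighbors u v huv := by
    have hu : (neighborsAtDist G u y 2).ncard = b 1 :=
      h.ncard_neighborsAtDist_add_one (dist_eq_one_iff_adj.2 u.2.symm)
    have hv : (neighborsAtDist G v y 2).ncard = b 1 :=
      h.ncard_neighborsAtDist_add_one (dist_eq_one_iff_adj.2 v.2.symm)
    have hμ : (G.commonNeighbors u v).ncard = c 2 := by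
      rw [← neighborsAtDist_one]
      exact h.ncard_neighborsAtDist_sub_one ((compl_adj_iff_dist_eq_two u.2 v.2).1 huv)
    have hdiff := congrArg Set.ncard (commonNeighbors_sdiff_singleton_eq hQ u.2 v.2 huv)
    have hy : y ∈ G.commonNeighbors u v := ⟨u.2.symm, v.2.symm⟩
    have hμ_pos : 0 < (G.commonNeighbors u v).ncard := (Set.ncard_pos).2 ⟨y, hy⟩
    have hsub : neighborsAtDist G u y 2 ∪ neighborsAtDist G v y 2 ⊆ G.neighborSet y :=
      Set.union_subset (fun _ hz => hz.1) fun _ hz => hz.1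
    rw [Set.ncard_sdiff_singleton_of_mem hy, Set.ncard_sdiff hsub, h.ncard_neighborSet] at hdiff
    have hle := Set.ncard_le_ncard hsub
    rw [h.ncard_neighborSet] at hle
    have hcount := Set.ncard_union_add_ncard_inter (neighborsAtDist G u y 2)
      (neighborsAtDist G v y 2)
    rw [← Set.ncard_image_of_injective _ Subtype.val_injective, commonNeighbors_eq,
      Set.image_inter Subtype.val_injective, image_neighborSet_coLocalGraph,
      image_neighborSet_coLocalGraph]
    omega

theorem hasQuadrangle (h : IsDRG G D b c) (hb : 3 * b 1 < 2 * b 0) (hclaw3 : HasClaw G 3)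
    (hclaw4 : ¬HasClaw G 4) : HasQuadrangle G := by
  by_contra hQ
  obtain ⟨y, hy⟩ := hasClaw_iff.1 hclaw3
  have hcard := (h.isEdgeRegular_coLocalGraph hQ y).two_mul_card_eq
    (cliqueFree_coLocalGraph hclaw4) (twoKTwoFree_coLocalGraph hQ) hy
  rw [Nat.card_coe_set_eq, h.ncard_neighborSet] at hcard
  omega

end IsDRG

theorem HasQuadrangle.exists_isClique_neighborsAtDist {V : Type*} {G : SimpleGraph V}
    (hQ : HasQuadrangle G) (hclaw : ¬HasClaw G 4) :
    ∃ x y, G.dist x y = 2 ∧ G.IsClique (neighborsAtDist G x y 3) := by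
  obtain ⟨x, z₁, y, z₂, hxy, hz, hxz₁, hz₁y, hyz₂, hz₂x⟩ := hQ
  refine ⟨x, y, hxy, (isClique_neighborsAtDist_or hclaw x y (j := 1) (by norm_num)).resolve_left ?_⟩
  intro hclique
  rw [neighborsAtDist_one] at hclique
  have hcompl := (compl_adj_iff_dist_eq_two hxz₁ hz₂x.symm).2 hz
  exact hcompl.2 (hclique ⟨hxz₁, hz₁y.symm⟩ ⟨hz₂x.symm, hyz₂⟩ hcompl.1)

/-! ### The Delsarte clique bound -/

theorem exists_aeval_ne_zero_mul_eq_smul {K A : Type*} [Field K] [Ring A] [Algebra K A] {a : A}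
    (ha : IsIntegral K a) {θ : K} (hθ : (minpoly K a).IsRoot θ) :
    ∃ p : Polynomial K, Polynomial.aeval a p ≠ 0 ∧
      Polynomial.aeval a p * a = θ • Polynomial.aeval a p := by
  obtain ⟨p, hp⟩ := Polynomial.dvd_iff_isRoot.2 hθ
  have hp_monic : p.Monic := (Polynomial.monic_X_sub_C θ).of_mul_monic_left (hp ▸ minpoly.monic ha)
  refine ⟨p, fun hzero => ?_, ?_⟩
  · have hdeg := Polynomial.natDegree_le_natDegree (minpoly.min K a hp_monic hzero)
    rw [hp, (Polynomial.monic_X_sub_C θ).natDegree_mul hp_monic,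
      Polynomial.natDegree_X_sub_C] at hdeg
    omega
  · have hzero : Polynomial.aeval a (p * (Polynomial.X - Polynomial.C θ)) = 0 := by
      rw [mul_comm, ← hp, minpoly.aeval]
    rw [map_mul, map_sub, Polynomial.aeval_X, Polynomial.aeval_C, mul_sub, sub_eq_zero] at hzero
    rw [hzero, Algebra.smul_def, Algebra.commutes]

theorem IsAdjEigenvalue.isRoot_minpoly {V : Type*} [Fintype V] [DecidableEq V] {G : SimpleGraph V}
    [DecidableRel G.Adj] {θ : ℝ} (hθ : IsAdjEigenvalue G θ) :
    (minpoly ℝ (G.adjMatrix ℝ)).IsRoot θ := by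
  obtain ⟨v, hv0, hv⟩ := hθ
  rw [← Matrix.minpoly_toLin']
  exact Module.End.isRoot_of_hasEigenvalue (Module.End.hasEigenvalue_of_hasEigenvector
    (Module.End.hasEigenvector_iff.2 ⟨Module.End.mem_eigenspace_iff.2 hv, hv0⟩))

/-- Otherwise the adjacency matrix would be positive semidefinite with trace zero, hence zero. -/
theorem exists_isAdjEigenvalue_neg {V : Type*} [Fintype V] {G : SimpleGraph V} [DecidableRel G.Adj]
    {u v : V} (huv : G.Adj u v) : ∃ θ, IsAdjEigenvalue G θ ∧ θ < 0 := by
  classical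
  by_contra! hnonneg
  have hH : (G.adjMatrix ℝ).IsHermitian := by
    rw [Matrix.IsHermitian, Matrix.conjTranspose_eq_transpose_of_trivial, transpose_adjMatrix]
  have hpsd : (G.adjMatrix ℝ).PosSemidef := by
    refine hH.posSemidef_iff_eigenvalues_nonneg.2 fun i =>
      hnonneg _ ⟨hH.eigenvectorBasis i, fun hzero => ?_, hH.mulVec_eigenvectorBasis i⟩
    exact hH.eigenvectorBasis.orthonormal.ne_zero i (WithLp.ofLp_eq_zero 2 |>.1 hzero)
  have hzero := hpsd.trace_eq_zero_iff.1 (G.trace_adjMatrix ℝ)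
  simpa [huv] using congrFun₂ hzero u v

/-- The matrices in the span of the distance matrices of `G`, that is, in the Bose–Mesner algebra
when `G` is distance-regular. -/
def IsDistInvariant {V R : Type*} (G : SimpleGraph V) (M : Matrix V V R) : Prop :=
  ∃ f : ℕ → R, ∀ x y, M x y = f (G.dist x y)

namespace IsDRG

variable {V R : Type*} [Fintype V] {G : SimpleGraph V} [DecidableRel G.Adj] {D : ℕ} {b c : ℕ → ℕ}
  {i : ℕ} {x y : V}

theorem card_neighborFinset (h : IsDRG G D b c) (y : V) : #(G.neighborFinset y) = b 0 := by
  rw [← h.ncard_neighborSet y, ← Set.ncard_coe_finset, coe_neighborFinset]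

/-- Comparing `f` with its value at `i` avoids a case distinction at `i = 0`, where `i - 1 = i`. -/
theorem sum_neighborFinset [Ring R] (h : IsDRG G D b c) (hxy : G.dist x y = i) (f : ℕ → R) :
    ∑ z ∈ G.neighborFinset y, f (G.dist x z) =
      b 0 * f i + c i * (f (i - 1) - f i) + b i * (f (i + 1) - f i) := by
  classical
  have hcard (j : ℕ) : #{z ∈ G.neighborFinset y | G.dist x z = j} =
      (neighborsAtDist G x y j).ncard := by
    rw [← Set.ncard_coe_finset]
    simp [neighborsAtDist]
  have hpt : ∀ z ∈ G.neighborFinset y, f (G.dist x z) = f i +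
      (if G.dist x z = i - 1 then f (i - 1) - f i else 0) +
      (if G.dist x z = i + 1 then f (i + 1) - f i else 0) := by
    intro z hz
    have hdist := ((G.mem_neighborFinset y z).1 hz).diff_dist_adj (u := x)
    rw [hxy] at hdist
    split_ifs with hprev hnext hnext
    · omega
    · simp [hprev]
    · simp [hnext]
    · rw [hdist.resolve_right (by tauto), add_zero, add_zero]
  rw [sum_congr rfl hpt, sum_add_distrib, sum_add_distrib, ← sum_filter, ← sum_filter, sum_const,
    sum_const, sum_const, hcard, hcard, h.card_neighborFinset, h.ncard_neighborsAtDist_sub_one hxy,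
    h.ncard_neighborsAtDist_add_one hxy]
  simp only [nsmul_eq_mul]

theorem isDistInvariant_mul_adjMatrix [Ring R] (h : IsDRG G D b c) {M : Matrix V V R}
    (hM : IsDistInvariant G M) : IsDistInvariant G (M * G.adjMatrix R) := by
  obtain ⟨f, hf⟩ := hM
  refine ⟨fun i => b 0 * f i + c i * (f (i - 1) - f i) + b i * (f (i + 1) - f i), fun x y => ?_⟩
  rw [mul_adjMatrix_apply, sum_congr rfl fun z _ => hf x z, h.sum_neighborFinset rfl f]

theorem isDistInvariant_aeval [DecidableEq V] [CommRing R] (h : IsDRG G D b c)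
    (p : Polynomial R) : IsDistInvariant G (Polynomial.aeval (G.adjMatrix R) p) := by
  induction p using Polynomial.induction_on with
  | C a =>
    refine ⟨fun i => if i = 0 then a else 0, fun x y => ?_⟩
    simp only [Polynomial.aeval_C, Matrix.algebraMap_matrix_apply, Algebra.algebraMap_self,
      RingHom.id_apply, h.1.dist_eq_zero_iff]
  | add p q hp hq =>
    obtain ⟨f, hf⟩ := hp
    obtain ⟨g, hg⟩ := hq
    exact ⟨fun i => f i + g i, fun x y => by rw [map_add, Matrix.add_apply, hf, hg]⟩
  | monomial n a hn =>
    rw [pow_succ, ← mul_assoc, map_mul, Polynomial.aeval_X]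
    exact h.isDistInvariant_mul_adjMatrix hn

/-- The matrix is `B ^ 2`, where `B` is the value at the adjacency matrix of its minimal polynomial
divided by `X - θ`; so it is a positive multiple of the projection onto the eigenspace of `θ`. -/
theorem exists_posSemidef (h : IsDRG G D b c) {θ : ℝ} (hθ : IsAdjEigenvalue G θ) :
    ∃ f : ℕ → ℝ, (Matrix.of fun x y => f (G.dist x y)).PosSemidef ∧ 0 < f 0 ∧
      b 0 * f 1 = θ * f 0 := by
  classical
  obtain ⟨p, hB_ne, hBA⟩ :=
    exists_aeval_ne_zero_mul_eq_smul (Matrix.isIntegral _) hθ.isRoot_minpoly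
  obtain ⟨g, hg⟩ := h.isDistInvariant_aeval p
  obtain ⟨f, hf⟩ := h.isDistInvariant_aeval (p * p)
  rw [map_mul] at hf
  set A := G.adjMatrix ℝ
  set B := Polynomial.aeval A p
  have hB_symm : B.conjTranspose = B := by
    ext x y
    rw [Matrix.conjTranspose_apply, hg, hg, dist_comm, star_trivial]
  have hE : (Matrix.of fun x y => f (G.dist x y)) = B * B := by
    ext x y
    exact (hf x y).symm
  have hpsd : (B * B).PosSemidef := by
    simpa only [hB_symm] using Matrix.posSemidef_self_mul_conjTranspose B
  have hE_ne : B * B ≠ 0 := by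
    simpa only [hB_symm] using mt Matrix.self_mul_conjTranspose_eq_zero.1 hB_ne
  obtain ⟨x₀, -, -⟩ := h.2.1
  have hf0 : 0 ≤ f 0 := by
    simpa [hf] using hpsd.diag_nonneg (i := x₀)
  refine ⟨f, hE ▸ hpsd, hf0.lt_of_ne' fun hzero => hE_ne ?_, ?_⟩
  · rw [← hpsd.trace_eq_zero_iff]
    simp [Matrix.trace, hf, hzero]
  · have hEA : B * B * A = θ • (B * B) := by rw [mul_assoc, hBA, mul_smul_comm]
    have hdiag := congrFun₂ hEA x₀ x₀
    rw [mul_adjMatrix_apply, sum_congr rfl fun z _ => hf x₀ z, h.sum_neighborFinset G.dist_self,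
      Matrix.smul_apply, hf, dist_self, Nat.zero_sub, sub_self, smul_eq_mul] at hdiag
    linear_combination hdiag

theorem nonneg_of_isClique (h : IsDRG G D b c) {θ : ℝ} (hθ : IsAdjEigenvalue G θ) {S : Finset V}
    (hS : G.IsClique S) (hne : S.Nonempty) : 0 ≤ b 0 + (#S - 1) * θ := by
  classical
  obtain ⟨f, hpsd, hf0, hf1⟩ := h.exists_posSemidef hθ
  have hrow : ∀ x ∈ S, ∑ y ∈ S, f (G.dist x y) = f 0 + (#S - 1) * f 1 := by
    intro x hx
    have hadj : ∀ y ∈ S.erase x, f (G.dist x y) = f 1 := fun y hy => by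
      rw [dist_eq_one_iff_adj.2 (hS hx (mem_of_mem_erase hy) (ne_of_mem_erase hy).symm)]
    rw [← add_sum_erase _ _ hx, dist_self, sum_congr rfl hadj, sum_const, nsmul_eq_mul,
      cast_card_erase_of_mem hx]
  have hquad : 0 ≤ ∑ x ∈ S, ∑ y ∈ S, f (G.dist x y) := by
    have := hpsd.dotProduct_mulVec_nonneg (fun x => if x ∈ S then 1 else 0)
    simpa [dotProduct, Matrix.mulVec] using this
  rw [sum_congr rfl hrow, sum_const, nsmul_eq_mul] at hquad
  have hcard : (0 : ℝ) < #S := by exact_mod_cast hne.card_pos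
  have hprod : 0 ≤ (b 0 + (#S - 1) * θ) * f 0 := by
    calc 0 ≤ b 0 * (f 0 + (#S - 1) * f 1) :=
          mul_nonneg (Nat.cast_nonneg _) (nonneg_of_mul_nonneg_right hquad hcard)
      _ = (b 0 + (#S - 1) * θ) * f 0 := by linear_combination ((#S : ℝ) - 1) * hf1
  exact nonneg_of_mul_nonneg_left hprod hf0

theorem ncard_le_one_add_div (h : IsDRG G D b c) {θ : ℝ} (hθ : IsAdjEigenvalue G θ) (hneg : θ < 0)
    {S : Set V} (hS : G.IsClique S) : (S.ncard : ℝ) ≤ 1 + b 0 / -θ := by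
  lift S to Finset V using S.toFinite
  rw [Set.ncard_coe_finset]
  have hneg' : 0 < -θ := neg_pos.2 hneg
  rcases S.eq_empty_or_nonempty with rfl | hne
  · rw [card_empty, Nat.cast_zero]
    exact add_nonneg zero_le_one (div_nonneg (Nat.cast_nonneg _) hneg'.le)
  · have := h.nonneg_of_isClique hθ hS hne
    rw [← sub_le_iff_le_add', le_div_iff₀ hneg']
    linarith

theorem ncard_le_div_of_subset_neighborSet (h : IsDRG G D b c) {θ : ℝ} (hθ : IsAdjEigenvalue G θ)
    (hneg : θ < 0) {S : Set V} (hS : G.IsClique S) (hsub : S ⊆ G.neighborSet y) :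
    (S.ncard : ℝ) ≤ b 0 / -θ := by
  have := h.ncard_le_one_add_div hθ hneg (hS.insert (a := y) fun z hz _ => hsub hz)
  rw [Set.ncard_insert_of_notMem fun hy => (hsub hy).ne rfl] at this
  push_cast at this
  linarith

end IsDRG

/-- a DRG with `D ≥ 3`, `3 ≤ k < 3(a₁+1)`, with a 3-claw but no 4-claws,
satisfies `b₂ ≤ a₁ + 1`, `b₂ ≤ a₃ + 1` and `b₂ ≤ k/(-θ_D)`, where `θ_D` is the smallest
adjacency eigenvalue (here `a_i = k - b_i - c_i`). -/
theorem statement7 {V : Type*} [Fintype V] (G : SimpleGraph V) [DecidableRel G.Adj]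
    (D : ℕ) (b c : ℕ → ℕ) (θD : ℝ)
    (hdrg : IsDRG G D b c) (hD : 3 ≤ D) (hk : 3 ≤ b 0)
    (hk' : (b 0 : ℤ) < 3 * (((b 0 : ℤ) - b 1 - c 1) + 1))
    (hclaw3 : HasClaw G 3) (hclaw4 : ¬ HasClaw G 4)
    (hθ : IsAdjEigenvalue G θD) (hθmin : ∀ θ, IsAdjEigenvalue G θ → θD ≤ θ) :
    (b 2 : ℤ) ≤ ((b 0 : ℤ) - b 1 - c 1) + 1 ∧
    (b 2 : ℤ) ≤ ((b 0 : ℤ) - b 3 - c 3) + 1 ∧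
    (b 2 : ℝ) ≤ (b 0 : ℝ) / (-θD) := by
  have hb : 3 * b 1 < 2 * b 0 := by
    have hc1 : c 1 = 1 := hdrg.2.2.2.2.1
    omega
  obtain ⟨x, y, hxy, hclique⟩ :=
    (hdrg.hasQuadrangle hb hclaw3 hclaw4).exists_isClique_neighborsAtDist hclaw4
  have hcard : (neighborsAtDist G x y 3).ncard = b 2 := hdrg.ncard_neighborsAtDist_add_one hxy
  obtain ⟨w, hw⟩ : (neighborsAtDist G x y 3).Nonempty := by
    rw [← Set.ncard_pos, hcard]
    exact hdrg.b_pos hD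
  have hneg : θD < 0 := by
    obtain ⟨θ, hθ, hθ0⟩ := exists_isAdjEigenvalue_neg hw.1
    exact (hθmin θ hθ).trans_lt hθ0
  rw [← hcard]
  exact ⟨hdrg.ncard_le_of_isClique_of_dist hclique ⟨w, hw⟩ fun z hz => dist_eq_one_iff_adj.2 hz.1,
    hdrg.ncard_le_of_isClique_of_dist hclique ⟨w, hw⟩ fun z hz => hz.2,
    hdrg.ncard_le_div_of_subset_neighborSet hθ hneg hclique fun z hz => hz.1⟩
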